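/- Let n ≥ 2 and 1 < m < n. There exists a constant C > 0 such that for every Schwartz function φ on ℝⁿ, ‖⟨x⟩^{-m/2} ⟨D_x⟩^{(m-1)/2} e^{itp(D_x)} φ‖_{L²(ℝ^{1+n}_{t,x})} ≤ C ‖φ‖_{L²(ℝⁿ)}. -/

import Mathlib

open MeasureTheory Real Complex RealInnerProductSpace

noncomputable section

/-- Fourier transform with convention `(2π)^(-n/2) ∫ e^(-ix·ξ) f(x) dx`. -/
def FT (n : ℕ) (f : EuclideanSpace ℝ (Fin n) → ℂ) (ξ : EuclideanSpace ℝ (Fin n)) : ℂ :=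
  ((2 * π) ^ (-(n : ℝ) / 2) : ℝ) •
    ∫ x : EuclideanSpace ℝ (Fin n), Complex.exp (-Complex.I * ((⟪x, ξ⟫ : ℝ) : ℂ)) * f x

/-- Inverse Fourier transform. -/
def IFT (n : ℕ) (F : EuclideanSpace ℝ (Fin n) → ℂ) (x : EuclideanSpace ℝ (Fin n)) : ℂ :=
  ((2 * π) ^ (-(n : ℝ) / 2) : ℝ) •
    ∫ ξ : EuclideanSpace ℝ (Fin n), Complex.exp (Complex.I * ((⟪x, ξ⟫ : ℝ) : ℂ)) * F ξ

/-- Fourier multiplier with symbol `q`: `q(D_x) f = IFT (q · FT f)`. -/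
def mult (n : ℕ) (q : EuclideanSpace ℝ (Fin n) → ℂ) (f : EuclideanSpace ℝ (Fin n) → ℂ) :
    EuclideanSpace ℝ (Fin n) → ℂ :=
  IFT n fun ξ => q ξ * FT n f ξ

/-!
The weight `⟨x⟩^{-m}` is a superposition of the Gaussians `exp (-u²|x|²)`, by the integral defining
`Γ (m/2)`. For a single Gaussian, with a further factor `exp (-δ²t²)` in time, the square of the
oscillatory integral opens into a double integral over two frequencies `ξ, η`: the `x`-integral is
a Gaussian in `ξ - η` of width `u`, and the `t`-integral is `δ⁻¹` times a Gaussian in `p ξ - p η`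
of width `δ`. By the Schur test it remains to bound the total mass of this positive kernel,
uniformly in `η`.

In polar coordinates adapted to `a` the mass is an integral over the level sets `{a = ρ}`. A
Gaussian of width `u` sees a piece of size `min ρ u ^ (n - 1)` of such a level set, and
superposing over `u` gives at most a multiple of `ρ ^ (m - 1) (1 + ρ) ^ (-(m - 1))`; this is where
`1 < m < n` enters. The second factor cancels the symbol `⟨ξ⟩^{m-1}`, and the first is the Jacobian
of `τ = ρ ^ m = p`, so the Gaussian in `τ - p η` integrates to a multiple of `δ`. This cancels the
`δ⁻¹` from the time integral, and `δ → 0` by Fatou's lemma.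
-/

open scoped ENNReal

/-! ### Gaussians -/

/-- The Gaussian `v ↦ exp (-b² ‖v‖²)`, used both to regularize integrals and to decompose the weight
`⟨x⟩^(-m)`. With `b` rather than `b²` as the parameter, dilations produce natural powers of `b`. -/
def gaussianBump {V : Type*} [Norm V] (b : ℝ) (v : V) : ℝ :=
  rexp (-(b * ‖v‖) ^ 2)

section Gaussian

variable {V : Type*} [NormedAddCommGroup V] {b : ℝ} {v w : V}

theorem gaussianBump_pos : 0 < gaussianBump b v :=
  exp_pos _

theorem gaussianBump_le_one : gaussianBump b v ≤ 1 := by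
  rw [gaussianBump, Real.exp_le_one_iff, neg_nonpos]
  positivity

theorem gaussianBump_neg : gaussianBump b (-v) = gaussianBump b v := by
  rw [gaussianBump, norm_neg, gaussianBump]

@[fun_prop]
theorem continuous_gaussianBump : Continuous fun p : ℝ × V => gaussianBump p.1 p.2 := by
  unfold gaussianBump
  fun_prop

theorem gaussianBump_le_gaussianBump {W : Type*} [NormedAddCommGroup W] {b' : ℝ} {w : W}
    (hb : 0 ≤ b) (h : b * ‖v‖ ≤ b' * ‖w‖) : gaussianBump b' w ≤ gaussianBump b v := by
  unfold gaussianBump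
  gcongr

theorem gaussianBump_le_exp_one_mul_gaussianBump_half_add (hb : 0 ≤ b) (hw : b * ‖w‖ ≤ 1) :
    gaussianBump b v ≤ rexp 1 * gaussianBump (b / 2) (v + w) := by
  have hadd : b * ‖v + w‖ ≤ b * ‖v‖ + 1 :=
    calc b * ‖v + w‖ ≤ b * (‖v‖ + ‖w‖) := by gcongr; exact norm_add_le v w
      _ ≤ b * ‖v‖ + 1 := by linarith
  have hsq : (b * ‖v + w‖) ^ 2 ≤ (b * ‖v‖ + 1) ^ 2 := by gcongr
  rw [gaussianBump, gaussianBump, ← Real.exp_add, Real.exp_le_exp]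
  nlinarith [sq_nonneg (b * ‖v‖ - 1)]

variable [InnerProductSpace ℝ V] [FiniteDimensional ℝ V] [MeasurableSpace V] [BorelSpace V]

theorem integral_gaussianBump_mul_cexp (hb : 0 < b) (w : V) :
    ∫ v : V, (gaussianBump b v : ℂ) * cexp (I * (⟪w, v⟫ : ℝ)) =
      ((√π / b) ^ Module.finrank ℝ V * gaussianBump (2 * b)⁻¹ w : ℝ) := by
  have hconst : ((π : ℂ) / (b ^ 2 : ℝ)) ^ (Module.finrank ℝ V / 2 : ℂ) =
      ((√π / b) ^ Module.finrank ℝ V : ℝ) := by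
    have hsq : π / b ^ 2 = (√π / b) ^ 2 := by rw [div_pow, sq_sqrt pi_pos.le]
    rw [← ofReal_div, ← ofReal_natCast, ← ofReal_ofNat, ← ofReal_div, ← ofReal_cpow (by positivity),
      hsq, ← Real.rpow_natCast, ← Real.rpow_mul (by positivity), Nat.cast_ofNat,
      mul_div_cancel₀ _ two_ne_zero, Real.rpow_natCast]
  have hfourier := GaussianFourier.integral_cexp_neg_mul_sq_norm_add
    (b := (b ^ 2 : ℝ)) (by simpa only [ofReal_re] using pow_pos hb 2) I w
  rw [hconst] at hfourier
  convert hfourier using 1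
  · refine integral_congr_ae (.of_forall fun v => ?_)
    simp only [gaussianBump, ofReal_exp, ← Complex.exp_add]
    push_cast
    ring_nf
  · rw [ofReal_mul, gaussianBump, ofReal_exp, I_sq]
    push_cast
    field_simp
    norm_num

theorem integral_gaussianBump (hb : 0 < b) :
    ∫ v : V, gaussianBump b v = (√π / b) ^ Module.finrank ℝ V := by
  have h := integral_gaussianBump_mul_cexp hb (0 : V)
  simp only [inner_zero_left, ofReal_zero, mul_zero, Complex.exp_zero, mul_one] at h
  rw [integral_complex_ofReal] at h
  simpa [gaussianBump] using ofReal_injective h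

theorem integrable_gaussianBump (hb : 0 < b) : Integrable (gaussianBump b : V → ℝ) := by
  refine .of_integral_ne_zero ?_
  rw [integral_gaussianBump hb]
  positivity

theorem lintegral_gaussianBump_sub (hb : 0 < b) (w : V) :
    ∫⁻ v : V, .ofReal (gaussianBump b (v - w)) = .ofReal ((√π / b) ^ Module.finrank ℝ V) := by
  rw [lintegral_sub_right_eq_self (fun v : V => ENNReal.ofReal (gaussianBump b v)) w,
    ← integral_gaussianBump hb, ofReal_integral_eq_lintegral_ofReal (integrable_gaussianBump hb)
      (.of_forall fun _ => gaussianBump_pos.le)]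

end Gaussian

/-! ### Polar coordinates -/

theorem lintegral_Ioi_comp_div {s : ℝ} (hs : 0 < s) (f : ℝ → ℝ≥0∞) :
    ∫⁻ r in Set.Ioi 0, f r = .ofReal s⁻¹ * ∫⁻ ρ in Set.Ioi 0, f (ρ / s) := by
  have himage : (fun ρ => ρ / s) '' Set.Ioi 0 = Set.Ioi 0 := by
    simp_rw [div_eq_inv_mul, Set.image_mul_left_Ioi (inv_pos.2 hs), mul_zero]
  have hsubst := lintegral_image_eq_lintegral_abs_deriv_mul (s := Set.Ioi 0)
    (f := fun ρ => ρ / s) (f' := fun _ => s⁻¹) measurableSet_Ioi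
    (fun ρ _ => by simpa using ((hasDerivAt_id ρ).div_const s).hasDerivWithinAt)
    (fun _ _ _ _ h => (div_left_inj' hs.ne').1 h) f
  rwa [himage, abs_of_pos (inv_pos.2 hs), lintegral_const_mul' _ _ ENNReal.ofReal_ne_top] at hsubst

theorem lintegral_Ioi_rpow_mul_comp_rpow {m : ℝ} (hm : 0 < m) (f : ℝ → ℝ≥0∞) :
    ∫⁻ ρ in Set.Ioi 0, .ofReal (ρ ^ (m - 1)) * f (ρ ^ m) =
      .ofReal m⁻¹ * ∫⁻ τ in Set.Ioi 0, f τ := by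
  have himage : (fun ρ : ℝ => ρ ^ m) '' Set.Ioi 0 = Set.Ioi 0 := by
    refine Set.Subset.antisymm (Set.image_subset_iff.2 fun ρ hρ => rpow_pos_of_pos hρ m)
      fun τ hτ => ⟨τ ^ m⁻¹, rpow_pos_of_pos hτ _, rpow_inv_rpow (le_of_lt hτ) hm.ne'⟩
  have hsubst := lintegral_image_eq_lintegral_abs_deriv_mul (s := Set.Ioi 0)
    (f := fun ρ : ℝ => ρ ^ m) (f' := fun ρ => m * ρ ^ (m - 1)) measurableSet_Ioi
    (fun ρ hρ => (hasDerivAt_rpow_const (.inl (ne_of_gt hρ))).hasDerivWithinAt)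
    (fun ρ hρ τ hτ h => (rpow_left_inj (le_of_lt hρ) (le_of_lt hτ) hm.ne').1 h) f
  rw [himage] at hsubst
  rw [hsubst, ← lintegral_const_mul' _ _ ENNReal.ofReal_ne_top]
  refine setLIntegral_congr_fun measurableSet_Ioi fun ρ (hρ : 0 < ρ) => ?_
  rw [abs_of_pos (by positivity), ENNReal.ofReal_mul hm.le, ← mul_assoc, ← mul_assoc,
    ← ENNReal.ofReal_mul (by positivity), inv_mul_cancel₀ hm.ne', ENNReal.ofReal_one, one_mul]

section Polar

variable {E : Type*} [NormedAddCommGroup E] [NormedSpace ℝ E] [FiniteDimensional ℝ E]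
  [Nontrivial E] [MeasurableSpace E] [BorelSpace E] (μ : Measure E) [μ.IsAddHaarMeasure]

theorem lintegral_polar {f : E → ℝ≥0∞} (hf : Measurable f) :
    ∫⁻ x, f x ∂μ = ∫⁻ θ : Metric.sphere (0 : E) 1, (∫⁻ r in Set.Ioi (0 : ℝ),
      .ofReal (r ^ (Module.finrank ℝ E - 1)) * f (r • (θ : E))) ∂μ.toSphere := by
  have hpunctured : ∫⁻ x, f x ∂μ = ∫⁻ x : ({0}ᶜ : Set E), f x ∂(μ.comap (↑)) := by
    rw [lintegral_subtype_comap (measurableSet_singleton _).compl, restrict_compl_singleton]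
  have hpolar := μ.measurePreserving_homeomorphUnitSphereProd.symm
    (homeomorphUnitSphereProd E).toMeasurableEquiv
  have hf' : Measurable fun p => f ((homeomorphUnitSphereProd E).toMeasurableEquiv.symm p) :=
    hf.comp (measurable_subtype_coe.comp (MeasurableEquiv.measurable _))
  rw [hpunctured, ← hpolar.lintegral_comp_emb (MeasurableEquiv.measurableEmbedding _),
    lintegral_prod _ hf'.aemeasurable]
  refine lintegral_congr fun θ => ?_
  rw [Measure.volumeIoiPow, lintegral_withDensity_eq_lintegral_mul _ (by fun_prop)
      (by exact hf'.comp measurable_prodMk_left), ← lintegral_subtype_comap measurableSet_Ioi]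
  simp [Homeomorph.toMeasurableEquiv]

theorem lintegral_polar_div {f : E → ℝ≥0∞} (hf : Measurable f) {s : E → ℝ}
    (hs : ∀ θ, ‖θ‖ = 1 → 0 < s θ) :
    ∫⁻ x, f x ∂μ = ∫⁻ θ : Metric.sphere (0 : E) 1, .ofReal ((s θ)⁻¹ ^ Module.finrank ℝ E) *
      (∫⁻ ρ in Set.Ioi (0 : ℝ), .ofReal (ρ ^ (Module.finrank ℝ E - 1)) * f ((ρ / s θ) • (θ : E)))
      ∂μ.toSphere := by
  rw [lintegral_polar μ hf]
  refine lintegral_congr fun θ => ?_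
  have hsθ := hs θ (norm_eq_of_mem_sphere θ)
  rw [lintegral_Ioi_comp_div hsθ, ← lintegral_const_mul' _ _ ENNReal.ofReal_ne_top,
    ← lintegral_const_mul' _ _ ENNReal.ofReal_ne_top]
  refine setLIntegral_congr_fun measurableSet_Ioi fun ρ (_ : 0 < ρ) => ?_
  rw [← mul_assoc, ← mul_assoc, ← ENNReal.ofReal_mul (by positivity),
    ← ENNReal.ofReal_mul (by positivity), div_eq_mul_inv, mul_pow,
    ← mul_pow_sub_one (Module.finrank_pos (R := ℝ) (M := E)).ne' (s θ)⁻¹]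
  congr 2
  ring

end Polar

/-! ### Gaussian averages over level sets -/

section Radial

variable {E : Type*} [NormedAddCommGroup E] [NormedSpace ℝ E]

theorem inv_mul_gaussianBump_le_lintegral_radial {L : ℝ} (hL : 0 < L)
    (k : ℕ) {θ : E} (hθ : ‖θ‖ = 1) (ω : E) :
    .ofReal L⁻¹ * .ofReal (gaussianBump L (θ - ω)) ≤ .ofReal (rexp 1) *
      ∫⁻ r in Set.Ioi (0 : ℝ), .ofReal (r ^ k) *
        .ofReal (gaussianBump (L / 2) (r • θ - ω)) := by
  have hshell : Set.Icc 1 (1 + L⁻¹) ⊆ Set.Ioi (0 : ℝ) := fun r hr => one_pos.trans_le hr.1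
  have hpointwise : ∀ r ∈ Set.Icc 1 (1 + L⁻¹), gaussianBump L (θ - ω) ≤
      rexp 1 * (r ^ k * gaussianBump (L / 2) (r • θ - ω)) := by
    intro r hr
    have hnorm : L * ‖(r - 1) • θ‖ ≤ 1 := by
      rw [norm_smul, hθ, mul_one, norm_of_nonneg (sub_nonneg.2 hr.1),
        ← le_inv_mul_iff₀ hL]
      linarith [hr.2]
    calc _ ≤ rexp 1 * gaussianBump (L / 2) (θ - ω + (r - 1) • θ) :=
          gaussianBump_le_exp_one_mul_gaussianBump_half_add hL.le hnorm
      _ = rexp 1 * gaussianBump (L / 2) (r • θ - ω) := by congr 2; module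
      _ ≤ _ := by
        gcongr
        exact le_mul_of_one_le_left gaussianBump_pos.le (one_le_pow₀ hr.1)
  calc _ = ∫⁻ _ in Set.Icc 1 (1 + L⁻¹), .ofReal (gaussianBump L (θ - ω)) := by
        rw [setLIntegral_const, Real.volume_Icc, add_sub_cancel_left, mul_comm]
    _ ≤ ∫⁻ r in Set.Icc 1 (1 + L⁻¹), .ofReal (rexp 1) * (.ofReal
          (r ^ k) * .ofReal (gaussianBump (L / 2) (r • θ - ω))) := by
        refine setLIntegral_mono' measurableSet_Icc fun r hr => ?_
        have hr0 : 0 < r := hshell hr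
        rw [← ENNReal.ofReal_mul (by positivity), ← ENNReal.ofReal_mul (by positivity)]
        exact ENNReal.ofReal_le_ofReal (hpointwise r hr)
    _ ≤ _ := by
        rw [lintegral_const_mul' _ _ ENNReal.ofReal_ne_top]
        gcongr

theorem mul_norm_sub_inv_norm_smul_le {ξ θ : E} (hθ : ‖θ‖ = 1) {r : ℝ} (hr : 0 ≤ r) :
    r * ‖θ - ‖ξ‖⁻¹ • ξ‖ ≤ 2 * ‖ξ - r • θ‖ := by
  have hξ : ‖ξ‖ • ‖ξ‖⁻¹ • ξ = ξ := by
    rcases eq_or_ne ξ 0 with rfl | hξ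
    · simp
    · rw [smul_inv_smul₀ (norm_ne_zero_iff.2 hξ)]
  have hunit : ‖‖ξ‖⁻¹ • ξ‖ ≤ 1 := by
    rw [norm_smul, norm_inv, norm_norm]
    exact inv_mul_le_one
  have hradial : |‖ξ‖ - r| ≤ ‖ξ - r • θ‖ := by
    simpa [norm_smul, hθ, abs_of_nonneg hr] using abs_norm_sub_norm_le ξ (r • θ)
  calc r * ‖θ - ‖ξ‖⁻¹ • ξ‖ = ‖(‖ξ‖ - r) • ‖ξ‖⁻¹ • ξ - (ξ - r • θ)‖ := by
        rw [sub_smul, hξ, ← norm_of_nonneg hr, ← norm_smul, norm_of_nonneg hr]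
        congr 1
        module
    _ ≤ |‖ξ‖ - r| * ‖‖ξ‖⁻¹ • ξ‖ + ‖ξ - r • θ‖ := by
        grw [norm_sub_le, norm_smul, norm_eq_abs]
    _ ≤ 2 * ‖ξ - r • θ‖ := by
        grw [hunit, hradial]
        linarith

theorem gaussianBump_sub_div_smul_le {ξ θ : E} (hθ : ‖θ‖ = 1) {α A ρ u : ℝ} (hα : 0 < α)
    (hαA : α ≤ A) (hρ : 0 ≤ ρ) (hu : 0 < u) :
    gaussianBump (2 * u)⁻¹ (ξ - (ρ / α) • θ) ≤
      gaussianBump (ρ / (4 * A * u)) (θ - ‖ξ‖⁻¹ • ξ) := by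
  have hA : 0 < A := hα.trans_le hαA
  refine gaussianBump_le_gaussianBump (by positivity) ?_
  calc _ = (4 * u)⁻¹ * (ρ / A * ‖θ - ‖ξ‖⁻¹ • ξ‖) := by field_simp
    _ ≤ (4 * u)⁻¹ * (ρ / α * ‖θ - ‖ξ‖⁻¹ • ξ‖) := by gcongr
    _ ≤ (4 * u)⁻¹ * (2 * ‖ξ - (ρ / α) • θ‖) := by
      gcongr (4 * u)⁻¹ * ?_
      exact mul_norm_sub_inv_norm_smul_le hθ (by positivity)
    _ = _ := by field_simp; norm_num

theorem mul_norm_le_of_homogeneous {a : E → ℝ} (ha_hom : ∀ t : ℝ, 0 < t → ∀ ξ, a (t • ξ) = t * a ξ)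
    {c : ℝ} (hac : ∀ ξ, ‖ξ‖ = 1 → c ≤ a ξ) (ξ : E) : c * ‖ξ‖ ≤ a ξ := by
  rcases eq_or_ne ξ 0 with rfl | hξ
  · have := ha_hom 2 two_pos 0
    rw [smul_zero] at this
    rw [norm_zero]
    linarith
  · have hξ' := norm_pos_iff.2 hξ
    calc c * ‖ξ‖ ≤ a (‖ξ‖⁻¹ • ξ) * ‖ξ‖ := by gcongr; exact hac _ (norm_smul_inv_norm hξ)
      _ = a ξ := by rw [ha_hom _ (inv_pos.2 hξ'), inv_mul_eq_div, div_mul_cancel₀ _ hξ'.ne']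

end Radial

section LevelSet

variable {E : Type*} [NormedAddCommGroup E] [InnerProductSpace ℝ E] [FiniteDimensional ℝ E]
  [Nontrivial E] [MeasurableSpace E] [BorelSpace E]

theorem lintegral_sphere_gaussianBump_le {L : ℝ} (hL : 0 < L) (ω : E) :
    ∫⁻ θ : Metric.sphere (0 : E) 1, .ofReal (gaussianBump L ((θ : E) - ω))
        ∂(volume : Measure E).toSphere ≤
      .ofReal (rexp 1 * (2 * √π) ^ Module.finrank ℝ E * L⁻¹ ^ (Module.finrank ℝ E - 1)) := by
  have hshell : .ofReal L⁻¹ * ∫⁻ θ : Metric.sphere (0 : E) 1,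
      .ofReal (gaussianBump L ((θ : E) - ω)) ∂(volume : Measure E).toSphere ≤
      .ofReal (rexp 1) * ENNReal.ofReal ((√π / (L / 2)) ^ Module.finrank ℝ E) := by
    rw [← lintegral_gaussianBump_sub (half_pos hL) ω, lintegral_polar volume (by fun_prop),
      ← lintegral_const_mul' _ _ ENNReal.ofReal_ne_top,
      ← lintegral_const_mul' _ _ ENNReal.ofReal_ne_top]
    exact lintegral_mono fun θ =>
      inv_mul_gaussianBump_le_lintegral_radial hL _ (norm_eq_of_mem_sphere θ) ω
  refine (ENNReal.mul_le_mul_iff_right (a := .ofReal L⁻¹) (by simpa) ENNReal.ofReal_ne_top).1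
    (hshell.trans_eq ?_)
  rw [← ENNReal.ofReal_mul (by positivity), ← ENNReal.ofReal_mul (by positivity),
    show √π / (L / 2) = 2 * √π * L⁻¹ by field_simp, mul_pow,
    ← mul_pow_sub_one (Module.finrank_pos (R := ℝ) (M := E)).ne' L⁻¹]
  congr 1
  ring

variable (E) in
theorem exists_pow_mul_lintegral_sphere_gaussianBump_le {B : ℝ} (hB : 0 < B) :
    ∃ C > 0, ∀ (ω : E) (ρ u : ℝ), 0 < ρ → 0 < u →
      .ofReal (ρ ^ (Module.finrank ℝ E - 1)) * ∫⁻ θ : Metric.sphere (0 : E) 1,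
        .ofReal (gaussianBump (ρ / (B * u)) ((θ : E) - ω)) ∂(volume : Measure E).toSphere ≤
      .ofReal C * .ofReal (min ρ u ^ (Module.finrank ℝ E - 1)) := by
  set σ := (volume : Measure E).toSphere
  set d := Module.finrank ℝ E
  refine ⟨rexp 1 * (2 * √π) ^ d * B ^ (d - 1) + σ.real Set.univ, by positivity,
    fun ω ρ u hρ hu => ?_⟩
  rw [← ENNReal.ofReal_mul (by positivity)]
  rcases le_total ρ u with hρu | huρ
  · have htrivial : ∫⁻ θ : Metric.sphere (0 : E) 1,
        .ofReal (gaussianBump (ρ / (B * u)) ((θ : E) - ω)) ∂σ ≤ .ofReal (σ.real Set.univ) :=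
      calc _ ≤ ∫⁻ _, 1 ∂σ := lintegral_mono fun θ => ENNReal.ofReal_le_one.2 gaussianBump_le_one
        _ = .ofReal (σ.real Set.univ) := by rw [lintegral_one, ofReal_measureReal]
    grw [min_eq_left hρu, htrivial, ← ENNReal.ofReal_mul (by positivity), mul_comm]
    gcongr
    exact le_add_of_nonneg_left (by positivity)
  · grw [min_eq_right huρ, lintegral_sphere_gaussianBump_le (by positivity) ω,
      ← ENNReal.ofReal_mul (by positivity), inv_div, div_pow, mul_pow B,
      show Module.finrank ℝ E = d from rfl]
    refine ENNReal.ofReal_le_ofReal ?_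
    calc _ = rexp 1 * (2 * √π) ^ d * B ^ (d - 1) * u ^ (d - 1) := by field_simp
      _ ≤ _ := by gcongr; exact le_add_of_nonneg_right (by positivity)

theorem exists_lintegral_gaussianBump_mul_comp_le {a : E → ℝ} (ha : Measurable a)
    (ha_hom : ∀ t : ℝ, 0 < t → ∀ ξ, a (t • ξ) = t * a ξ) {c A : ℝ} (hc : 0 < c)
    (hac : ∀ ξ, ‖ξ‖ = 1 → a ξ ∈ Set.Icc c A) :
    ∃ C > 0, ∀ (ξ : E) (u : ℝ), 0 < u → ∀ ψ : ℝ → ℝ≥0∞, Measurable ψ →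
      ∫⁻ η, .ofReal (gaussianBump (2 * u)⁻¹ (ξ - η)) * ψ (a η) ≤
        .ofReal C * ∫⁻ ρ in Set.Ioi 0, .ofReal (min ρ u ^ (Module.finrank ℝ E - 1)) * ψ ρ := by
  obtain ⟨v, hv⟩ := exists_norm_eq E zero_le_one
  have hA : 0 < A := hc.trans_le ((hac v hv).1.trans (hac v hv).2)
  obtain ⟨C, hC, hsphere⟩ :=
    exists_pow_mul_lintegral_sphere_gaussianBump_le E (B := 4 * A) (by positivity)
  set d := Module.finrank ℝ E
  refine ⟨c⁻¹ ^ d * C, by positivity, fun ξ u hu ψ hψ => ?_⟩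
  set ω := ‖ξ‖⁻¹ • ξ
  have hmeas : Measurable fun p : Metric.sphere (0 : E) 1 × ℝ => ENNReal.ofReal (p.2 ^ (d - 1)) *
      .ofReal (gaussianBump (p.2 / (4 * A * u)) ((p.1 : E) - ω)) * ψ p.2 := by
    fun_prop
  calc _ = ∫⁻ θ : Metric.sphere (0 : E) 1, .ofReal ((a θ)⁻¹ ^ d) * (∫⁻ ρ in Set.Ioi (0 : ℝ),
          .ofReal (ρ ^ (d - 1)) * (.ofReal (gaussianBump (2 * u)⁻¹ (ξ - (ρ / a θ) • (θ : E))) *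
            ψ (a ((ρ / a θ) • (θ : E))))) ∂(volume : Measure E).toSphere :=
        lintegral_polar_div volume (by fun_prop) fun θ hθ => hc.trans_le (hac θ hθ).1
    _ ≤ ∫⁻ θ : Metric.sphere (0 : E) 1, .ofReal (c⁻¹ ^ d) * (∫⁻ ρ in Set.Ioi (0 : ℝ),
          .ofReal (ρ ^ (d - 1)) * .ofReal (gaussianBump (ρ / (4 * A * u)) ((θ : E) - ω)) * ψ ρ)
            ∂(volume : Measure E).toSphere := by
        refine lintegral_mono fun θ => ?_
        obtain ⟨hcθ, hθA⟩ := hac θ (norm_eq_of_mem_sphere θ)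
        have haθ : 0 < a θ := hc.trans_le hcθ
        gcongr ?_ * ?_
        · gcongr
        · refine setLIntegral_mono' measurableSet_Ioi fun ρ (hρ : 0 < ρ) => ?_
          grw [ha_hom _ (by positivity), div_mul_cancel₀ _ haθ.ne', mul_assoc,
            gaussianBump_sub_div_smul_le (norm_eq_of_mem_sphere θ) haθ hθA hρ.le hu]
    _ = .ofReal (c⁻¹ ^ d) * ∫⁻ ρ in Set.Ioi (0 : ℝ), .ofReal (ρ ^ (d - 1)) *
          (∫⁻ θ : Metric.sphere (0 : E) 1, .ofReal (gaussianBump (ρ / (4 * A * u)) ((θ : E) - ω))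
            ∂(volume : Measure E).toSphere) * ψ ρ := by
        rw [lintegral_const_mul' _ _ ENNReal.ofReal_ne_top,
          lintegral_lintegral_swap hmeas.aemeasurable]
        congr 1
        refine lintegral_congr fun ρ => ?_
        rw [lintegral_mul_const _ (by fun_prop), lintegral_const_mul' _ _ ENNReal.ofReal_ne_top]
    _ ≤ .ofReal (c⁻¹ ^ d) * ∫⁻ ρ in Set.Ioi (0 : ℝ),
          .ofReal C * (.ofReal (min ρ u ^ (d - 1)) * ψ ρ) := by
        gcongr _ * ?_
        refine setLIntegral_mono' measurableSet_Ioi fun ρ hρ => ?_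
        grw [hsphere ω ρ u hρ hu, mul_assoc]
    _ = _ := by
        rw [lintegral_const_mul' _ _ ENNReal.ofReal_ne_top, ← mul_assoc,
          ← ENNReal.ofReal_mul (by positivity)]

end LevelSet

/-! ### Superposition of Gaussians -/

theorem lintegral_Ioi_rpow_mul_exp_neg_mul_sq {p b : ℝ} (hp : 0 < p) (hb : 0 < b) :
    ∫⁻ u in Set.Ioi 0, .ofReal (u ^ (p - 1) * rexp (-(b * u ^ 2))) =
      .ofReal (b ^ (-(p / 2)) * (Real.Gamma (p / 2) / 2)) := by
  have hint := _root_.integral_rpow_mul_exp_neg_mul_rpow (p := 2) (q := p - 1) (b := b)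
    two_pos (by linarith) hb
  simp only [sub_add_cancel, neg_div, neg_mul, Real.rpow_two] at hint
  have := Real.Gamma_pos_of_pos (half_pos hp)
  rw [← ofReal_integral_eq_lintegral_ofReal (.of_integral_ne_zero (by rw [hint]; positivity)), hint]
  · ring_nf
  · filter_upwards [ae_restrict_mem measurableSet_Ioi] with u (hu : 0 < u)
    exact (by positivity : 0 ≤ u ^ (p - 1) * rexp (-(b * u ^ 2)))

theorem ofReal_sqrt_one_add_sq_rpow_neg {V : Type*} [Norm V] {m : ℝ} (hm : 0 < m) (x : V) :
    ENNReal.ofReal (√(1 + ‖x‖ ^ 2) ^ (-m)) = .ofReal (2 / Real.Gamma (m / 2)) *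
      ∫⁻ u in Set.Ioi 0, .ofReal (u ^ (m - 1) * rexp (-u ^ 2)) * .ofReal (gaussianBump u x) := by
  have := Real.Gamma_pos_of_pos (half_pos hm)
  have hint : ∫⁻ u in Set.Ioi 0,
      .ofReal (u ^ (m - 1) * rexp (-u ^ 2)) * .ofReal (gaussianBump u x) =
      .ofReal ((1 + ‖x‖ ^ 2) ^ (-(m / 2)) * (Real.Gamma (m / 2) / 2)) := by
    rw [← lintegral_Ioi_rpow_mul_exp_neg_mul_sq hm (by positivity)]
    refine setLIntegral_congr_fun measurableSet_Ioi fun u (hu : 0 < u) => ?_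
    rw [← ENNReal.ofReal_mul (by positivity), mul_assoc, gaussianBump, ← Real.exp_add]
    ring_nf
  rw [hint, ← ENNReal.ofReal_mul (by positivity), mul_left_comm, ← inv_div (Real.Gamma _),
    inv_mul_cancel₀ (by positivity), mul_one, sqrt_eq_rpow, ← Real.rpow_mul (by positivity)]
  ring_nf

theorem lintegral_Ioc_rpow {p ρ : ℝ} (hp : 0 < p) (hρ : 0 ≤ ρ) :
    ∫⁻ u in Set.Ioc 0 ρ, .ofReal (u ^ (p - 1)) = .ofReal (ρ ^ p / p) := by
  have hint : IntervalIntegrable (fun u : ℝ => u ^ (p - 1)) volume 0 ρ :=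
    intervalIntegral.intervalIntegrable_rpow' (by linarith)
  rw [← ofReal_integral_eq_lintegral_ofReal hint.1, ← intervalIntegral.integral_of_le hρ,
    integral_rpow (.inl (by linarith)), sub_add_cancel, Real.zero_rpow hp.ne', sub_zero]
  filter_upwards [ae_restrict_mem measurableSet_Ioc] with u hu using rpow_nonneg hu.1.le _

theorem lintegral_Ioi_rpow {s ρ : ℝ} (hs : s < 0) (hρ : 0 < ρ) :
    ∫⁻ u in Set.Ioi ρ, .ofReal (u ^ (s - 1)) = .ofReal (ρ ^ s / -s) := by
  rw [← ofReal_integral_eq_lintegral_ofReal (integrableOn_Ioi_rpow_of_lt (by linarith) hρ),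
    integral_Ioi_rpow_of_lt (by linarith) hρ, sub_add_cancel, div_neg, neg_div]
  filter_upwards [ae_restrict_mem measurableSet_Ioi] with u hu using
    rpow_nonneg (hρ.le.trans (le_of_lt hu)) _

theorem lintegral_Ioi_rpow_mul_min_pow {p : ℝ} {k : ℕ} (hp : 0 < p) (hpk : p < k) {ρ : ℝ}
    (hρ : 0 < ρ) :
    ∫⁻ u in Set.Ioi 0, .ofReal (u ^ (p - k - 1) * min ρ u ^ k) =
      .ofReal ((p⁻¹ + (k - p)⁻¹) * ρ ^ p) := by
  have : 0 < k - p := sub_pos.2 hpk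
  have hnear : ∫⁻ u in Set.Ioc 0 ρ, .ofReal (u ^ (p - k - 1) * min ρ u ^ k) =
      .ofReal (ρ ^ p / p) := by
    rw [← lintegral_Ioc_rpow hp hρ.le]
    refine setLIntegral_congr_fun measurableSet_Ioc fun u hu => ?_
    rw [min_eq_right hu.2, ← Real.rpow_natCast, ← Real.rpow_add hu.1]
    ring_nf
  have hfar : ∫⁻ u in Set.Ioi ρ, .ofReal (u ^ (p - k - 1) * min ρ u ^ k) =
      .ofReal (ρ ^ p / (k - p)) := by
    calc _ = ∫⁻ u in Set.Ioi ρ, .ofReal (ρ ^ k) * .ofReal (u ^ (p - k - 1)) := by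
          refine setLIntegral_congr_fun measurableSet_Ioi fun u (hu : ρ < u) => ?_
          rw [min_eq_left hu.le, ← ENNReal.ofReal_mul (by positivity), mul_comm]
      _ = .ofReal (ρ ^ p / (k - p)) := by
          rw [lintegral_const_mul' _ _ ENNReal.ofReal_ne_top, lintegral_Ioi_rpow (by linarith) hρ,
            ← ENNReal.ofReal_mul (by positivity), neg_sub, ← mul_div_assoc, ← Real.rpow_natCast,
            ← Real.rpow_add hρ, add_sub_cancel]
  rw [← Set.Ioc_union_Ioi_eq_Ioi hρ.le, lintegral_union measurableSet_Ioi Set.Ioc_disjoint_Ioi_same,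
    hnear, hfar, ← ENNReal.ofReal_add (by positivity) (by positivity)]
  ring_nf

theorem one_add_rpow_le {p ρ : ℝ} (hp : 0 ≤ p) (hρ : 0 ≤ ρ) :
    (1 + ρ) ^ p ≤ 2 ^ p * (1 + ρ ^ p) := by
  have hρp : 0 ≤ ρ ^ p := rpow_nonneg hρ p
  rcases le_total ρ 1 with hρ1 | hρ1
  · calc (1 + ρ) ^ p ≤ 2 ^ p * 1 := by rw [mul_one]; gcongr; linarith
      _ ≤ _ := by gcongr; linarith
  · calc (1 + ρ) ^ p ≤ (2 * ρ) ^ p := by gcongr; linarith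
      _ = 2 ^ p * ρ ^ p := mul_rpow zero_le_two hρ
      _ ≤ _ := by gcongr; linarith

theorem exists_one_add_rpow_mul_lintegral_Ioi_le {p : ℝ} {k : ℕ} (hp : 0 < p) (hpk : p < k) :
    ∃ C > 0, ∀ ρ : ℝ, 0 < ρ → .ofReal ((1 + ρ) ^ p) *
      ∫⁻ u in Set.Ioi 0, .ofReal (u ^ (p - k - 1) * rexp (-u ^ 2) * min ρ u ^ k) ≤
        .ofReal C * .ofReal (ρ ^ p) := by
  have : 0 < k - p := sub_pos.2 hpk
  have := Real.Gamma_pos_of_pos (half_pos hp)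
  refine ⟨2 ^ p * (Real.Gamma (p / 2) / 2 + (p⁻¹ + (k - p)⁻¹)), by positivity, fun ρ hρ => ?_⟩
  set J := ∫⁻ u in Set.Ioi 0, .ofReal (u ^ (p - k - 1) * rexp (-u ^ 2) * min ρ u ^ k)
  have hgamma : J ≤ .ofReal (Real.Gamma (p / 2) / 2) := by
    rw [← one_mul (Real.Gamma _ / 2), ← Real.one_rpow (-(p / 2)),
      ← lintegral_Ioi_rpow_mul_exp_neg_mul_sq hp one_pos]
    refine setLIntegral_mono' measurableSet_Ioi fun u (hu : 0 < u) => ENNReal.ofReal_le_ofReal ?_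
    calc _ ≤ u ^ (p - k - 1) * rexp (-u ^ 2) * u ^ k := by gcongr; exact min_le_right ρ u
      _ = u ^ (p - k - 1) * u ^ (k : ℝ) * rexp (-(1 * u ^ 2)) := by
        rw [Real.rpow_natCast, one_mul]; ring
      _ = _ := by rw [← Real.rpow_add hu]; ring_nf
  have hpower : J ≤ .ofReal ((p⁻¹ + (k - p)⁻¹) * ρ ^ p) := by
    rw [← lintegral_Ioi_rpow_mul_min_pow hp hpk hρ]
    refine setLIntegral_mono' measurableSet_Ioi fun u (hu : 0 < u) => ENNReal.ofReal_le_ofReal ?_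
    gcongr
    exact mul_le_of_le_one_right (by positivity) (Real.exp_le_one_iff.2 (by nlinarith))
  calc _ ≤ .ofReal (2 ^ p * (1 + ρ ^ p)) * J := by grw [one_add_rpow_le hp.le hρ.le]
    _ = .ofReal (2 ^ p) * (.ofReal (ρ ^ p) * J + J) := by
      rw [ENNReal.ofReal_mul (by positivity), ENNReal.ofReal_add one_pos.le (by positivity),
        ENNReal.ofReal_one]
      ring
    _ ≤ .ofReal (2 ^ p) * (.ofReal (ρ ^ p) * .ofReal (Real.Gamma (p / 2) / 2) +
          .ofReal ((p⁻¹ + (k - p)⁻¹) * ρ ^ p)) := by gcongr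
    _ = _ := by
      rw [← ENNReal.ofReal_mul (by positivity),
        ← ENNReal.ofReal_add (by positivity) (by positivity),
        ← ENNReal.ofReal_mul (by positivity), ← ENNReal.ofReal_mul (by positivity)]
      ring_nf

theorem one_add_rpow_le_mul_one_add_rpow {c p r α : ℝ} (hc : 0 < c) (hp : 0 ≤ p) (hr : 0 ≤ r)
    (hα : c * r ≤ α) : (1 + r) ^ p ≤ (1 + c⁻¹) ^ p * (1 + α) ^ p := by
  have hα' : 0 ≤ α := le_trans (by positivity) hα
  rw [← mul_rpow (by positivity) (by positivity)]
  gcongr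
  calc 1 + r ≤ 1 + c⁻¹ * α := by gcongr; rwa [le_inv_mul_iff₀ hc]
    _ ≤ (1 + c⁻¹) * (1 + α) := by
      have := inv_pos.2 hc
      linarith

theorem lintegral_Ioi_rpow_mul_gaussianBump_le {m b : ℝ} (hm : 0 < m) (hb : 0 < b) (q : ℝ) :
    ∫⁻ ρ in Set.Ioi 0, .ofReal (ρ ^ (m - 1)) * .ofReal (gaussianBump b (q - ρ ^ m)) ≤
      .ofReal (m⁻¹ * (√π / b)) := by
  calc _ = .ofReal m⁻¹ * ∫⁻ τ in Set.Ioi 0, .ofReal (gaussianBump b (τ - q)) := by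
        rw [← lintegral_Ioi_rpow_mul_comp_rpow hm]
        simp_rw [← gaussianBump_neg (v := _ ^ m - q), neg_sub]
    _ ≤ .ofReal m⁻¹ * ∫⁻ τ, .ofReal (gaussianBump b (τ - q)) := by grw [setLIntegral_le_lintegral]
    _ = _ := by
      rw [lintegral_gaussianBump_sub hb, Module.finrank_self, pow_one,
        ← ENNReal.ofReal_mul (by positivity)]

section LevelSetAverage

variable {E : Type*} [NormedAddCommGroup E] [InnerProductSpace ℝ E] [FiniteDimensional ℝ E]
  [Nontrivial E] [MeasurableSpace E] [BorelSpace E]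

theorem exists_lintegral_mul_lintegral_gaussianBump_mul_comp_le {a : E → ℝ} (ha : Measurable a)
    (ha_hom : ∀ t : ℝ, 0 < t → ∀ ξ, a (t • ξ) = t * a ξ) {c A : ℝ} (hc : 0 < c)
    (hac : ∀ ξ, ‖ξ‖ = 1 → a ξ ∈ Set.Icc c A) :
    ∃ C > 0, ∀ (ξ : E) (κ ψ : ℝ → ℝ≥0∞), Measurable κ → Measurable ψ →
      ∫⁻ u in Set.Ioi 0, κ u * ∫⁻ η, .ofReal (gaussianBump (2 * u)⁻¹ (ξ - η)) * ψ (a η) ≤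
        .ofReal C * ∫⁻ ρ in Set.Ioi 0,
          (∫⁻ u in Set.Ioi 0, κ u * .ofReal (min ρ u ^ (Module.finrank ℝ E - 1))) * ψ ρ := by
  obtain ⟨C, hC, hlevel⟩ := exists_lintegral_gaussianBump_mul_comp_le ha ha_hom hc hac
  refine ⟨C, hC, fun ξ κ ψ hκ hψ => ?_⟩
  calc _ ≤ ∫⁻ u in Set.Ioi 0, .ofReal C * ∫⁻ ρ in Set.Ioi 0,
          κ u * .ofReal (min ρ u ^ (Module.finrank ℝ E - 1)) * ψ ρ := by
        refine setLIntegral_mono' measurableSet_Ioi fun u hu => ?_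
        grw [hlevel ξ u hu ψ hψ, mul_left_comm, ← lintegral_const_mul _ (by fun_prop)]
        simp_rw [mul_assoc, le_refl]
    _ = _ := by
        rw [lintegral_const_mul' _ _ ENNReal.ofReal_ne_top, lintegral_lintegral_swap (by fun_prop)]
        congr! 3 with ρ
        exact lintegral_mul_const _ (by fun_prop)

theorem exists_lintegral_lintegral_weight_mul_gaussianBump_le {m : ℝ} (hm : 1 < m)
    (hmd : m < Module.finrank ℝ E) {a : E → ℝ} (ha : Measurable a)
    (ha_hom : ∀ t : ℝ, 0 < t → ∀ ξ, a (t • ξ) = t * a ξ) {c A : ℝ} (hc : 0 < c)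
    (hac : ∀ ξ, ‖ξ‖ = 1 → a ξ ∈ Set.Icc c A) :
    ∃ C > 0, ∀ (ξ : E) (ψ : ℝ → ℝ≥0∞), Measurable ψ →
      ∫⁻ u in Set.Ioi 0, .ofReal (u ^ (m - Module.finrank ℝ E - 1) * rexp (-u ^ 2)) *
        ∫⁻ η, .ofReal (gaussianBump (2 * u)⁻¹ (ξ - η)) *
          (.ofReal ((1 + ‖η‖) ^ (m - 1)) * ψ (a η)) ≤
      .ofReal C * ∫⁻ ρ in Set.Ioi 0, .ofReal (ρ ^ (m - 1)) * ψ ρ := by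
  set d := Module.finrank ℝ E
  have hd : ((d - 1 : ℕ) : ℝ) = d - 1 := Nat.cast_pred Module.finrank_pos
  obtain ⟨C₁, hC₁, hlevel⟩ := exists_lintegral_mul_lintegral_gaussianBump_mul_comp_le ha ha_hom
    hc hac
  obtain ⟨C₂, hC₂, hradial⟩ := exists_one_add_rpow_mul_lintegral_Ioi_le (p := m - 1) (k := d - 1)
    (by linarith) (by linarith)
  rw [show m - 1 - (d - 1 : ℕ) - 1 = m - d - 1 by rw [hd]; ring] at hradial
  set K := (1 + c⁻¹) ^ (m - 1)
  set κ : ℝ → ℝ≥0∞ := fun u => .ofReal (u ^ (m - d - 1) * rexp (-u ^ 2))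
  refine ⟨C₁ * (K * C₂), by positivity, fun ξ ψ hψ => ?_⟩
  calc _ ≤ ∫⁻ u in Set.Ioi 0, κ u * ∫⁻ η, .ofReal (gaussianBump (2 * u)⁻¹ (ξ - η)) *
          (.ofReal (K * (1 + a η) ^ (m - 1)) * ψ (a η)) := by
        gcongr with u η
        exact one_add_rpow_le_mul_one_add_rpow hc (by linarith) (norm_nonneg η)
          (mul_norm_le_of_homogeneous ha_hom (fun θ hθ => (hac θ hθ).1) η)
    _ ≤ .ofReal C₁ * ∫⁻ ρ in Set.Ioi 0, (∫⁻ u in Set.Ioi 0,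
          κ u * .ofReal (min ρ u ^ (d - 1))) * (.ofReal (K * (1 + ρ) ^ (m - 1)) * ψ ρ) :=
        hlevel ξ κ (fun ρ => .ofReal (K * (1 + ρ) ^ (m - 1)) * ψ ρ) (by fun_prop) (by fun_prop)
    _ ≤ .ofReal C₁ * ∫⁻ ρ in Set.Ioi 0, .ofReal (K * C₂) * (.ofReal (ρ ^ (m - 1)) * ψ ρ) := by
        gcongr _ * ?_
        refine setLIntegral_mono' measurableSet_Ioi fun ρ hρ => ?_
        have hκρ : ∫⁻ u in Set.Ioi 0, κ u * .ofReal (min ρ u ^ (d - 1)) = ∫⁻ u in Set.Ioi 0,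
            .ofReal (u ^ (m - d - 1) * rexp (-u ^ 2) * min ρ u ^ (d - 1)) :=
          setLIntegral_congr_fun measurableSet_Ioi fun u (hu : 0 < u) =>
            (ENNReal.ofReal_mul (by positivity)).symm
        calc _ = .ofReal K * (.ofReal ((1 + ρ) ^ (m - 1)) *
              ∫⁻ u in Set.Ioi 0, κ u * .ofReal (min ρ u ^ (d - 1))) * ψ ρ := by
              rw [ENNReal.ofReal_mul (by positivity)]
              ring
          _ ≤ _ := by
              grw [hκρ, hradial ρ hρ, ENNReal.ofReal_mul (by positivity)]
              simp_rw [mul_assoc, le_refl]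
    _ = _ := by
        rw [lintegral_const_mul' _ _ ENNReal.ofReal_ne_top, ← mul_assoc,
          ← ENNReal.ofReal_mul (by positivity)]

end LevelSetAverage

/-! ### The `T T*` argument -/

theorem two_mul_mul_le_sq_add_sq (x y : ℝ≥0∞) : 2 * x * y ≤ x ^ 2 + y ^ 2 := by
  induction x with
  | top => simp
  | coe x =>
    induction y with
    | top => simp
    | coe y => exact_mod_cast two_mul_le_add_sq x y

open scoped ComplexConjugate

section TTStar

variable {X : Type*} [MeasurableSpace X] {ν : Measure X} [SFinite ν]

theorem lintegral_mul_enorm_integral_sq_le {Z : Type*} [MeasurableSpace Z] {μ : Measure Z}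
    [SFinite μ] {w : Z → ℝ} (hw : ∀ z, 0 ≤ w z) {g : Z → X → ℂ}
    (hint : Integrable (fun p : Z × X × X => (w p.1 : ℂ) * (g p.1 p.2.1 * conj (g p.1 p.2.2)))
      (μ.prod (ν.prod ν))) :
    ∫⁻ z, .ofReal (w z) * ‖∫ ξ, g z ξ ∂ν‖ₑ ^ 2 ∂μ ≤
      ∫⁻ ξ, ∫⁻ η, ‖∫ z, (w z : ℂ) * (g z ξ * conj (g z η)) ∂μ‖ₑ ∂ν ∂ν := by
  have hsq : ∀ z, ((w z * ‖∫ ξ, g z ξ ∂ν‖ ^ 2 : ℝ) : ℂ) =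
      ∫ p : X × X, (w z : ℂ) * (g z p.1 * conj (g z p.2)) ∂(ν.prod ν) := fun z => by
    rw [integral_const_mul, integral_prod_mul (fun ξ => g z ξ) (fun η => conj (g z η)),
      integral_conj, Complex.mul_conj, Complex.normSq_eq_norm_sq, ofReal_mul]
  have hsq_nonneg : ∀ z, 0 ≤ w z * ‖∫ ξ, g z ξ ∂ν‖ ^ 2 := fun z => mul_nonneg (hw z) (sq_nonneg _)
  have hsq_int : Integrable (fun z => w z * ‖∫ ξ, g z ξ ∂ν‖ ^ 2) μ := by
    have := hint.integral_prod_left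
    simp_rw [← hsq] at this
    exact this.re
  calc _ = ENNReal.ofReal (∫ z, w z * ‖∫ ξ, g z ξ ∂ν‖ ^ 2 ∂μ) := by
        rw [ofReal_integral_eq_lintegral_ofReal hsq_int (.of_forall hsq_nonneg)]
        simp_rw [ENNReal.ofReal_mul (hw _), ENNReal.ofReal_pow (norm_nonneg _), ofReal_norm]
    _ = ‖∫ z, ((w z * ‖∫ ξ, g z ξ ∂ν‖ ^ 2 : ℝ) : ℂ) ∂μ‖ₑ := by
        rw [integral_complex_ofReal, ← ofReal_norm, Complex.norm_real,
          norm_of_nonneg (integral_nonneg hsq_nonneg)]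
    _ = ‖∫ p : X × X, ∫ z, (w z : ℂ) * (g z p.1 * conj (g z p.2)) ∂μ ∂(ν.prod ν)‖ₑ := by
        simp_rw [hsq]
        rw [integral_integral_swap hint]
    _ ≤ ∫⁻ p : X × X, ‖∫ z, (w z : ℂ) * (g z p.1 * conj (g z p.2)) ∂μ‖ₑ ∂(ν.prod ν) :=
        enorm_integral_le_lintegral_enorm _
    _ = _ := lintegral_prod _ hint.integral_prod_right.aestronglyMeasurable.enorm

theorem lintegral_lintegral_mul_mul_le_of_symm {h φ : X → ℝ≥0∞} (hh : Measurable h)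
    (hφ : Measurable φ) {k : X → X → ℝ≥0∞} (hk : Measurable (Function.uncurry k))
    (hsymm : ∀ ξ η, k ξ η = k η ξ) :
    ∫⁻ ξ, ∫⁻ η, h ξ * φ ξ * (h η * φ η) * k ξ η ∂ν ∂ν ≤
      ∫⁻ ξ, φ ξ ^ 2 * ∫⁻ η, h η ^ 2 * k ξ η ∂ν ∂ν := by
  set J := ∫⁻ ξ, ∫⁻ η, φ ξ ^ 2 * (h η ^ 2 * k ξ η) ∂ν ∂ν
  have hJ_swap : ∫⁻ ξ, ∫⁻ η, φ η ^ 2 * (h ξ ^ 2 * k ξ η) ∂ν ∂ν = J := by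
    rw [lintegral_lintegral_swap (by fun_prop)]
    simp_rw [hsymm, J]
  have hJ : ∫⁻ ξ, φ ξ ^ 2 * ∫⁻ η, h η ^ 2 * k ξ η ∂ν ∂ν = J :=
    lintegral_congr fun ξ => (lintegral_const_mul _ (by fun_prop)).symm
  rw [hJ, ← ENNReal.mul_le_mul_iff_right two_ne_zero ENNReal.ofNat_ne_top, two_mul J]
  nth_rewrite 2 [← hJ_swap]
  rw [← lintegral_add_left (by fun_prop), ← lintegral_const_mul _ (by fun_prop)]
  refine lintegral_mono fun ξ => ?_
  rw [← lintegral_add_left (by fun_prop), ← lintegral_const_mul _ (by fun_prop)]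
  refine lintegral_mono fun η => ?_
  calc 2 * (h ξ * φ ξ * (h η * φ η) * k ξ η) = 2 * (φ ξ * h η) * (φ η * h ξ) * k ξ η := by ring
    _ ≤ ((φ ξ * h η) ^ 2 + (φ η * h ξ) ^ 2) * k ξ η := by grw [two_mul_mul_le_sq_add_sq]
    _ = _ := by ring

end TTStar

theorem norm_cexp_I_mul_ofReal (r : ℝ) : ‖cexp (I * r)‖ = 1 := by
  rw [mul_comm, norm_exp_ofReal_mul_I]

theorem cexp_I_mul_mul_conj {E : Type*} [NormedAddCommGroup E] [InnerProductSpace ℝ E]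
    (P : E → ℝ) (t : ℝ) (x ξ η : E) :
    cexp (I * (t * P ξ + ⟪x, ξ⟫ : ℝ)) * conj (cexp (I * (t * P η + ⟪x, η⟫ : ℝ))) =
      cexp (I * (⟪P ξ - P η, t⟫ : ℝ)) * cexp (I * (⟪ξ - η, x⟫ : ℝ)) := by
  have htime : ⟪P ξ - P η, t⟫ = t * (P ξ - P η) := by simp
  rw [← Complex.exp_conj, ← Complex.exp_add, ← Complex.exp_add, map_mul, conj_I, conj_ofReal,
    real_inner_comm x (ξ - η), inner_sub_right, htime]
  push_cast
  ring_nf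

section FourierExtension

variable {E : Type*} [NormedAddCommGroup E] [InnerProductSpace ℝ E] [FiniteDimensional ℝ E]
  [MeasurableSpace E] [BorelSpace E] {P : E → ℝ} {F : E → ℂ}

/-- The Fourier extension operator of the graph of `P`: without normalizing constants,
`fourierExtension P F (t, x)` is the value at `x` of `e^{itP(D)}` applied to the inverse Fourier
transform of `F`. -/
def fourierExtension (P : E → ℝ) (F : E → ℂ) (z : ℝ × E) : ℂ :=
  ∫ ξ, cexp (I * (z.1 * P ξ + ⟪z.2, ξ⟫ : ℝ)) * F ξ

theorem measurable_fourierExtension (hP : Measurable P) (hF : AEStronglyMeasurable F) :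
    Measurable (fourierExtension P F) := by
  have hmeas : StronglyMeasurable fun p : (ℝ × E) × E =>
      cexp (I * (p.1.1 * P p.2 + ⟪p.1.2, p.2⟫ : ℝ)) * hF.mk F p.2 :=
    (by fun_prop : Measurable fun p : (ℝ × E) × E =>
      cexp (I * (p.1.1 * P p.2 + ⟪p.1.2, p.2⟫ : ℝ))).stronglyMeasurable.mul
        (hF.stronglyMeasurable_mk.comp_measurable measurable_snd)
  convert hmeas.integral_prod_right' (ν := volume) |>.measurable using 2 with z
  refine integral_congr_ae ?_
  filter_upwards [hF.ae_eq_mk] with ξ hξ using by rw [hξ]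

theorem integral_gaussianBump_mul_fourierExtension_kernel {δ u : ℝ} (hδ : 0 < δ) (hu : 0 < u)
    (ξ η : E) :
    ∫ z : ℝ × E, ((gaussianBump δ z.1 * gaussianBump u z.2 : ℝ) : ℂ) *
      (cexp (I * (z.1 * P ξ + ⟪z.2, ξ⟫ : ℝ)) * F ξ *
        conj (cexp (I * (z.1 * P η + ⟪z.2, η⟫ : ℝ)) * F η)) =
    ((√π / δ * (√π / u) ^ Module.finrank ℝ E *
      (gaussianBump (2 * u)⁻¹ (ξ - η) * gaussianBump (2 * δ)⁻¹ (P ξ - P η)) : ℝ) : ℂ) *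
        (F ξ * conj (F η)) := by
  have hfactor : ∀ z : ℝ × E, ((gaussianBump δ z.1 * gaussianBump u z.2 : ℝ) : ℂ) *
      (cexp (I * (z.1 * P ξ + ⟪z.2, ξ⟫ : ℝ)) * F ξ *
        conj (cexp (I * (z.1 * P η + ⟪z.2, η⟫ : ℝ)) * F η)) =
      ((gaussianBump δ z.1 : ℂ) * cexp (I * (⟪P ξ - P η, z.1⟫ : ℝ))) *
        ((gaussianBump u z.2 : ℂ) * cexp (I * (⟪ξ - η, z.2⟫ : ℝ))) * (F ξ * conj (F η)) :=
    fun z => by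
      have hphase := cexp_I_mul_mul_conj P z.1 z.2 ξ η
      rw [map_mul, ofReal_mul]
      linear_combination (gaussianBump δ z.1 : ℂ) * gaussianBump u z.2 * F ξ * conj (F η) * hphase
  simp_rw [hfactor]
  rw [integral_mul_const, Measure.volume_eq_prod, integral_prod_mul
    (fun t : ℝ => (gaussianBump δ t : ℂ) * cexp (I * (⟪P ξ - P η, t⟫ : ℝ)))
    (fun x : E => (gaussianBump u x : ℂ) * cexp (I * (⟪ξ - η, x⟫ : ℝ))),
    integral_gaussianBump_mul_cexp hδ, integral_gaussianBump_mul_cexp hu, Module.finrank_self,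
    pow_one, ← ofReal_mul]
  ring_nf

theorem integrable_gaussianBump_mul_fourierExtension_kernel (hP : Measurable P)
    (hF : Integrable F) {δ u : ℝ} (hδ : 0 < δ) (hu : 0 < u) :
    Integrable fun p : (ℝ × E) × E × E =>
      ((gaussianBump δ p.1.1 * gaussianBump u p.1.2 : ℝ) : ℂ) *
        (cexp (I * (p.1.1 * P p.2.1 + ⟪p.1.2, p.2.1⟫ : ℝ)) * F p.2.1 *
          conj (cexp (I * (p.1.1 * P p.2.2 + ⟪p.1.2, p.2.2⟫ : ℝ)) * F p.2.2)) := by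
  have hF_conj : Integrable fun η => conj (F η) :=
    (ContinuousLinearEquiv.integrable_comp_iff Complex.conjCLE).2 hF
  have hweight : Integrable fun z : ℝ × E =>
      ((gaussianBump δ z.1 * gaussianBump u z.2 : ℝ) : ℂ) :=
    ((integrable_gaussianBump hδ).mul_prod (integrable_gaussianBump hu)).ofReal
  have hphase : Measurable fun p : (ℝ × E) × E × E =>
      cexp (I * (p.1.1 * P p.2.1 + ⟪p.1.2, p.2.1⟫ : ℝ)) *
        conj (cexp (I * (p.1.1 * P p.2.2 + ⟪p.1.2, p.2.2⟫ : ℝ))) := by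
    fun_prop
  have hprod : Integrable fun p : (ℝ × E) × E × E =>
      ((gaussianBump δ p.1.1 * gaussianBump u p.1.2 : ℝ) : ℂ) * (F p.2.1 * conj (F p.2.2)) :=
    hweight.mul_prod (hF.mul_prod hF_conj)
  refine (hprod.bdd_mul (c := 1) hphase.aestronglyMeasurable (.of_forall fun p => ?_)).congr
    (.of_forall fun p => ?_)
  · rw [norm_mul, RCLike.norm_conj, norm_cexp_I_mul_ofReal, norm_cexp_I_mul_ofReal, mul_one]
  · simp only [map_mul]
    ring

theorem lintegral_gaussianBump_mul_enorm_fourierExtension_sq_le (hP : Measurable P)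
    (hF : Integrable F) {δ u : ℝ} (hδ : 0 < δ) (hu : 0 < u) :
    ∫⁻ z : ℝ × E, .ofReal (gaussianBump δ z.1 * gaussianBump u z.2) *
      ‖fourierExtension P F z‖ₑ ^ 2 ≤
    .ofReal (√π / δ * (√π / u) ^ Module.finrank ℝ E) * ∫⁻ ξ, ∫⁻ η, ‖F ξ‖ₑ * ‖F η‖ₑ *
      .ofReal (gaussianBump (2 * u)⁻¹ (ξ - η) * gaussianBump (2 * δ)⁻¹ (P ξ - P η)) := by
  have hweight_nonneg : ∀ z : ℝ × E, 0 ≤ gaussianBump δ z.1 * gaussianBump u z.2 := fun z =>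
    mul_nonneg gaussianBump_pos.le gaussianBump_pos.le
  have hint := integrable_gaussianBump_mul_fourierExtension_kernel hP hF hδ hu
  refine (lintegral_mul_enorm_integral_sq_le (ν := volume)
    (g := fun (z : ℝ × E) ξ => cexp (I * (z.1 * P ξ + ⟪z.2, ξ⟫ : ℝ)) * F ξ)
    hweight_nonneg hint).trans_eq ?_
  rw [← lintegral_const_mul' _ _ ENNReal.ofReal_ne_top]
  refine lintegral_congr fun ξ => ?_
  rw [← lintegral_const_mul' _ _ ENNReal.ofReal_ne_top]
  refine lintegral_congr fun η => ?_
  have hkernel_pos := mul_pos (gaussianBump_pos (b := (2 * u)⁻¹) (v := ξ - η))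
    (gaussianBump_pos (b := (2 * δ)⁻¹) (v := P ξ - P η))
  rw [integral_gaussianBump_mul_fourierExtension_kernel hδ hu, enorm_mul, ← ofReal_norm (ofReal _),
    Complex.norm_real, Real.norm_of_nonneg (by positivity), ENNReal.ofReal_mul (by positivity),
    enorm_mul, RCLike.enorm_conj]
  ring

end FourierExtension

/-! ### Smoothing for `e^{itp(D)}` on a Euclidean space -/

theorem lintegral_sqrt_one_add_sq_rpow_neg_mul {Z V : Type*} [MeasurableSpace Z] {μ : Measure Z}
    [SFinite μ] [NormedAddCommGroup V] [MeasurableSpace V] [OpensMeasurableSpace V] {m : ℝ}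
    (hm : 0 < m) {f : Z → V} (hf : Measurable f) {Φ : Z → ℝ≥0∞} (hΦ : Measurable Φ) :
    ∫⁻ z, .ofReal (√(1 + ‖f z‖ ^ 2) ^ (-m)) * Φ z ∂μ =
      .ofReal (2 / Real.Gamma (m / 2)) * ∫⁻ u in Set.Ioi (0 : ℝ),
        .ofReal (u ^ (m - 1) * rexp (-u ^ 2)) * ∫⁻ z, .ofReal (gaussianBump u (f z)) * Φ z ∂μ := by
  have : Measurable fun p : ℝ × Z => ENNReal.ofReal (gaussianBump p.1 (f p.2)) := by
    have := hf.norm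
    unfold gaussianBump
    fun_prop
  have hinner : ∀ z, ENNReal.ofReal (√(1 + ‖f z‖ ^ 2) ^ (-m)) * Φ z =
      .ofReal (2 / Real.Gamma (m / 2)) * ∫⁻ u in Set.Ioi (0 : ℝ),
        .ofReal (u ^ (m - 1) * rexp (-u ^ 2)) * (.ofReal (gaussianBump u (f z)) * Φ z) := by
    intro z
    rw [ofReal_sqrt_one_add_sq_rpow_neg hm, mul_assoc, ← lintegral_mul_const _ (by fun_prop)]
    simp_rw [mul_assoc]
  simp_rw [hinner]
  rw [lintegral_const_mul' _ _ ENNReal.ofReal_ne_top, lintegral_lintegral_swap (by fun_prop)]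
  simp_rw [lintegral_const_mul' _ _ ENNReal.ofReal_ne_top]

theorem lintegral_le_of_forall_lintegral_gaussianBump_mul_le {Z V : Type*} [MeasurableSpace Z]
    {μ : Measure Z} [NormedAddCommGroup V] [MeasurableSpace V] [OpensMeasurableSpace V] {f : Z → V}
    (hf : Measurable f) {Φ : Z → ℝ≥0∞} (hΦ : Measurable Φ) {B : ℝ≥0∞}
    (hB : ∀ δ : ℝ, 0 < δ → ∫⁻ z, .ofReal (gaussianBump δ (f z)) * Φ z ∂μ ≤ B) :
    ∫⁻ z, Φ z ∂μ ≤ B := by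
  set δ : ℕ → ℝ := fun k => 1 / ((k : ℝ) + 1)
  have htendsto : ∀ z, Filter.Tendsto (fun k => ENNReal.ofReal (gaussianBump (δ k) (f z)) * Φ z)
      Filter.atTop (nhds (Φ z)) := fun z => by
    have hexp : Filter.Tendsto (fun k => gaussianBump (δ k) (f z)) Filter.atTop (nhds 1) := by
      have := ((tendsto_one_div_add_atTop_nhds_zero_nat (𝕜 := ℝ)).mul_const ‖f z‖).pow 2 |>.neg
      simpa [Function.comp_def, gaussianBump, δ] using (Real.continuous_exp.tendsto _).comp this
    simpa using ENNReal.Tendsto.mul_const (b := Φ z) (ENNReal.tendsto_ofReal hexp) (.inl (by simp))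
  calc ∫⁻ z, Φ z ∂μ
      = ∫⁻ z, Filter.liminf (fun k => ENNReal.ofReal (gaussianBump (δ k) (f z)) * Φ z)
          Filter.atTop ∂μ := lintegral_congr fun z => (htendsto z).liminf_eq.symm
    _ ≤ Filter.liminf (fun k => ∫⁻ z, ENNReal.ofReal (gaussianBump (δ k) (f z)) * Φ z ∂μ)
          Filter.atTop := lintegral_liminf_le fun k => by fun_prop
    _ ≤ B := Filter.liminf_le_of_le (by isBoundedDefault) fun b hb =>
        hb.exists.elim fun k hk => hk.trans (hB _ (by positivity))

section Smoothing

variable {E : Type*} [NormedAddCommGroup E] [InnerProductSpace ℝ E] [FiniteDimensional ℝ E]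
  [MeasurableSpace E] [BorelSpace E]

/-- The Schur integral at `ξ` of the `T T*` kernel of `f ↦ fourierExtension P (h f)`, localized by
Gaussians to `|t| ≲ δ⁻¹` and `|x| ≲ u⁻¹`: on the Fourier side to `|P ξ - P η| ≲ δ` and
`|ξ - η| ≲ u`. -/
def schurIntegral (P : E → ℝ) (h : E → ℂ) (δ u : ℝ) (ξ : E) : ℝ≥0∞ :=
  ∫⁻ η, .ofReal (gaussianBump (2 * u)⁻¹ (ξ - η)) *
    (‖h η‖ₑ ^ 2 * .ofReal (gaussianBump (2 * δ)⁻¹ (P ξ - P η)))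

theorem measurable_schurIntegral {P : E → ℝ} (hP : Measurable P) {h : E → ℂ} (hh : Measurable h)
    (δ : ℝ) : Measurable fun p : ℝ × E => schurIntegral P h δ p.1 p.2 := by
  refine Measurable.lintegral_prod_right' (ν := volume) (f := fun p : (ℝ × E) × E =>
    ENNReal.ofReal (gaussianBump (2 * p.1.1)⁻¹ (p.1.2 - p.2)) *
      (‖h p.2‖ₑ ^ 2 * .ofReal (gaussianBump (2 * δ)⁻¹ (P p.1.2 - P p.2)))) ?_
  unfold gaussianBump
  fun_prop

variable {m : ℝ} {a : E → ℝ} {c A : ℝ}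

theorem exists_lintegral_schurIntegral_le (hm : 1 < m) (hmd : m < Module.finrank ℝ E)
    (ha : Measurable a) (ha_hom : ∀ t : ℝ, 0 < t → ∀ ξ, a (t • ξ) = t * a ξ) (hc : 0 < c)
    (hac : ∀ ξ, ‖ξ‖ = 1 → a ξ ∈ Set.Icc c A) :
    ∃ C > 0, ∀ h : E → ℂ, (∀ η, ‖h η‖ ^ 2 ≤ (1 + ‖η‖) ^ (m - 1)) → ∀ (ξ : E) (δ : ℝ), 0 < δ →
      ∫⁻ u in Set.Ioi (0 : ℝ), .ofReal (u ^ (m - Module.finrank ℝ E - 1) * rexp (-u ^ 2)) *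
        schurIntegral (fun η => a η ^ m) h δ u ξ ≤ .ofReal (C * δ) := by
  have : Nontrivial E := Module.nontrivial_of_finrank_pos (R := ℝ) <| by
    exact_mod_cast (zero_lt_one.trans hm).trans hmd
  obtain ⟨C, hC, hlevel⟩ := exists_lintegral_lintegral_weight_mul_gaussianBump_le hm hmd ha ha_hom
    hc hac
  refine ⟨C * (m⁻¹ * (√π * 2)), by positivity, fun h hh ξ δ hδ => ?_⟩
  have hh_enorm : ∀ η, ‖h η‖ₑ ^ 2 ≤ .ofReal ((1 + ‖η‖) ^ (m - 1)) := fun η => by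
    rw [← ofReal_norm, ← ENNReal.ofReal_pow (norm_nonneg _)]
    exact ENNReal.ofReal_le_ofReal (hh η)
  refine (lintegral_mono fun u => mul_le_mul' le_rfl <| lintegral_mono fun η =>
    mul_le_mul' le_rfl <| mul_le_mul' (hh_enorm η) le_rfl).trans ?_
  refine (hlevel ξ (fun ρ => .ofReal (gaussianBump (2 * δ)⁻¹ (a ξ ^ m - ρ ^ m)))
    (by fun_prop)).trans ?_
  grw [lintegral_Ioi_rpow_mul_gaussianBump_le (by positivity) (by positivity)]
  rw [← ENNReal.ofReal_mul hC.le]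
  refine (congrArg _ ?_).le
  field_simp

variable {h f : E → ℂ}

theorem lintegral_gaussianBump_mul_enorm_fourierExtension_mul_sq_le {P : E → ℝ}
    (hP : Measurable P) (hh : Measurable h) (hf : Measurable f)
    (hint : Integrable fun ξ => h ξ * f ξ) {δ u : ℝ} (hδ : 0 < δ) (hu : 0 < u) :
    ∫⁻ z : ℝ × E, .ofReal (gaussianBump u z.2) * (.ofReal (gaussianBump δ z.1) *
      ‖fourierExtension P (fun ξ => h ξ * f ξ) z‖ₑ ^ 2) ≤
    .ofReal (√π / δ * (√π / u) ^ Module.finrank ℝ E) *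
      ∫⁻ ξ, ‖f ξ‖ₑ ^ 2 * schurIntegral P h δ u ξ := by
  set k : E → E → ℝ≥0∞ := fun ξ η =>
    .ofReal (gaussianBump (2 * u)⁻¹ (ξ - η) * gaussianBump (2 * δ)⁻¹ (P ξ - P η)) with hk
  have hk_meas : Measurable (Function.uncurry k) := by
    simp only [Function.uncurry_def, hk]
    fun_prop
  have hk_symm : ∀ ξ η, k ξ η = k η ξ := fun ξ η => by
    simp only [hk]
    rw [← gaussianBump_neg (v := ξ - η), ← gaussianBump_neg (v := P ξ - P η), neg_sub, neg_sub]
  simp_rw [mul_left_comm (ENNReal.ofReal (gaussianBump u _)), ← mul_assoc,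
    ← ENNReal.ofReal_mul gaussianBump_pos.le]
  refine (lintegral_gaussianBump_mul_enorm_fourierExtension_sq_le hP hint hδ hu).trans ?_
  gcongr ENNReal.ofReal _ * ?_
  simp_rw [enorm_mul]
  refine (lintegral_lintegral_mul_mul_le_of_symm (ν := volume) hh.enorm hf.enorm hk_meas
    hk_symm).trans_eq ?_
  refine lintegral_congr fun ξ => congrArg _ (lintegral_congr fun η => ?_)
  rw [mul_left_comm (ENNReal.ofReal _), ← ENNReal.ofReal_mul gaussianBump_pos.le]

theorem lintegral_gaussianBump_mul_weight_mul_enorm_fourierExtension_sq_le (hm : 0 < m)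
    {P : E → ℝ} (hP : Measurable P) (hh : Measurable h) (hf : Measurable f)
    (hint : Integrable fun ξ => h ξ * f ξ) {δ : ℝ} (hδ : 0 < δ) :
    ∫⁻ z : ℝ × E, .ofReal (gaussianBump δ z.1) * (.ofReal (√(1 + ‖z.2‖ ^ 2) ^ (-m)) *
      ‖fourierExtension P (fun ξ => h ξ * f ξ) z‖ₑ ^ 2) ≤
    .ofReal (2 / Real.Gamma (m / 2) * (√π / δ * √π ^ Module.finrank ℝ E)) * ∫⁻ ξ, ‖f ξ‖ₑ ^ 2 *
      ∫⁻ u in Set.Ioi (0 : ℝ), .ofReal (u ^ (m - Module.finrank ℝ E - 1) * rexp (-u ^ 2)) *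
        schurIntegral P h δ u ξ := by
  set d := Module.finrank ℝ E with hd
  have hv := measurable_fourierExtension hP hint.1
  have : 0 < Real.Gamma (m / 2) := Real.Gamma_pos_of_pos (by positivity)
  have hschur := measurable_schurIntegral hP hh δ
  have hfixed : ∀ u ∈ Set.Ioi (0 : ℝ), ENNReal.ofReal (u ^ (m - 1) * rexp (-u ^ 2)) *
      (.ofReal (√π / δ * (√π / u) ^ d) * ∫⁻ ξ, ‖f ξ‖ₑ ^ 2 * schurIntegral P h δ u ξ) =
      .ofReal (√π / δ * √π ^ d) * ∫⁻ ξ, ‖f ξ‖ₑ ^ 2 *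
        (.ofReal (u ^ (m - d - 1) * rexp (-u ^ 2)) * schurIntegral P h δ u ξ) := by
    intro u (hu : 0 < u)
    simp_rw [mul_left_comm (‖f _‖ₑ ^ 2)]
    rw [lintegral_const_mul' _ _ ENNReal.ofReal_ne_top, ← mul_assoc, ← mul_assoc,
      ← ENNReal.ofReal_mul (by positivity), ← ENNReal.ofReal_mul (by positivity),
      show m - d - 1 = m - 1 - d by ring, Real.rpow_sub_natCast hu.ne']
    congr 2
    rw [div_pow]
    field_simp
  simp_rw [mul_left_comm (ENNReal.ofReal (gaussianBump δ _))]
  rw [lintegral_sqrt_one_add_sq_rpow_neg_mul hm measurable_snd (by fun_prop),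
    ENNReal.ofReal_mul (by positivity), mul_assoc]
  gcongr ENNReal.ofReal _ * ?_
  calc _ ≤ ∫⁻ u in Set.Ioi (0 : ℝ), ENNReal.ofReal (√π / δ * √π ^ d) * ∫⁻ ξ, ‖f ξ‖ₑ ^ 2 *
          (.ofReal (u ^ (m - d - 1) * rexp (-u ^ 2)) * schurIntegral P h δ u ξ) :=
        setLIntegral_mono' measurableSet_Ioi fun u hu => by
          grw [lintegral_gaussianBump_mul_enorm_fourierExtension_mul_sq_le hP hh hf hint hδ hu,
            ← hd, hfixed u hu]
    _ = _ := by
        rw [lintegral_const_mul' _ _ ENNReal.ofReal_ne_top, lintegral_lintegral_swap (by fun_prop)]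
        simp_rw [lintegral_const_mul' _ _ (ENNReal.pow_ne_top enorm_ne_top : ‖f _‖ₑ ^ 2 ≠ ⊤)]

theorem exists_lintegral_weight_mul_enorm_fourierExtension_sq_le (hm : 1 < m)
    (hmd : m < Module.finrank ℝ E) (ha : Measurable a)
    (ha_hom : ∀ t : ℝ, 0 < t → ∀ ξ, a (t • ξ) = t * a ξ) (hc : 0 < c)
    (hac : ∀ ξ, ‖ξ‖ = 1 → a ξ ∈ Set.Icc c A) :
    ∃ C > 0, ∀ h f : E → ℂ, Measurable h → (∀ ξ, ‖h ξ‖ ^ 2 ≤ (1 + ‖ξ‖) ^ (m - 1)) →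
      Measurable f → Integrable (fun ξ => h ξ * f ξ) →
      ∫⁻ z : ℝ × E, .ofReal (√(1 + ‖z.2‖ ^ 2) ^ (-m)) *
        ‖fourierExtension (fun ξ => a ξ ^ m) (fun ξ => h ξ * f ξ) z‖ₑ ^ 2 ≤
      .ofReal C * ∫⁻ ξ, ‖f ξ‖ₑ ^ 2 := by
  obtain ⟨C, hC, hschur⟩ := exists_lintegral_schurIntegral_le hm hmd ha ha_hom hc hac
  have hm_pos : 0 < m := zero_lt_one.trans hm
  have : 0 < Real.Gamma (m / 2) := Real.Gamma_pos_of_pos (by positivity)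
  have hP : Measurable fun ξ => a ξ ^ m := ha.pow_const m
  refine ⟨2 / Real.Gamma (m / 2) * (√π * √π ^ Module.finrank ℝ E) * C, by positivity,
    fun h f hh hh_le hf hint => ?_⟩
  have hv := measurable_fourierExtension hP hint.1
  refine lintegral_le_of_forall_lintegral_gaussianBump_mul_le measurable_fst (by fun_prop)
    fun δ hδ => ?_
  grw [lintegral_gaussianBump_mul_weight_mul_enorm_fourierExtension_sq_le hm_pos hP hh hf hint hδ]
  grw [lintegral_mono fun ξ => mul_le_mul' (le_refl (‖f ξ‖ₑ ^ 2)) (hschur h hh_le ξ δ hδ)]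
  rw [lintegral_mul_const' _ _ ENNReal.ofReal_ne_top, mul_comm (∫⁻ ξ, ‖f ξ‖ₑ ^ 2), ← mul_assoc,
    ← ENNReal.ofReal_mul (by positivity)]
  refine (congrArg₂ _ (congrArg _ ?_) rfl).le
  field_simp

end Smoothing

/-! ### Schwartz functions -/

section Schwartz

open scoped FourierTransform SchwartzMap

variable {n : ℕ}

theorem FT_eq_smul_fourier (f : EuclideanSpace ℝ (Fin n) → ℂ) (ξ : EuclideanSpace ℝ (Fin n)) :
    FT n f ξ = ((2 * π) ^ (-(n : ℝ) / 2) : ℝ) • 𝓕 f ((2 * π)⁻¹ • ξ) := by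
  rw [FT, Real.fourier_eq']
  congr 1
  refine integral_congr_ae (.of_forall fun x => ?_)
  simp only [smul_eq_mul, inner_smul_right]
  congr 2
  push_cast
  have : (π : ℂ) ≠ 0 := by exact_mod_cast Real.pi_ne_zero
  field_simp

theorem exists_schwartzMap_eq_FT (φ : 𝓢(EuclideanSpace ℝ (Fin n), ℂ)) :
    ∃ ψ : 𝓢(EuclideanSpace ℝ (Fin n), ℂ), FT n φ = ψ := by
  set dilation : EuclideanSpace ℝ (Fin n) ≃L[ℝ] EuclideanSpace ℝ (Fin n) :=
    ContinuousLinearEquiv.smulLeft (Units.mk0 (2 * π)⁻¹ (by positivity))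
  refine ⟨((2 * π) ^ (-(n : ℝ) / 2) : ℝ) •
    SchwartzMap.compCLMOfContinuousLinearEquiv ℝ dilation (𝓕 φ), funext fun ξ => ?_⟩
  rw [FT_eq_smul_fourier, ← SchwartzMap.fourier_coe]
  rfl

theorem lintegral_enorm_sq_eq_ofReal_integral {X F : Type*} [MeasurableSpace X] {μ : Measure X}
    [NormedAddCommGroup F] {f : X → F} (hf : MemLp f 2 μ) :
    ∫⁻ x, ‖f x‖ₑ ^ 2 ∂μ = .ofReal (∫ x, ‖f x‖ ^ 2 ∂μ) := by
  rw [ofReal_integral_eq_lintegral_ofReal ((memLp_two_iff_integrable_sq_norm hf.1).1 hf)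
    (.of_forall fun x => sq_nonneg _)]
  simp_rw [ENNReal.ofReal_pow (norm_nonneg _), ofReal_norm]

theorem lintegral_enorm_FT_sq (φ : 𝓢(EuclideanSpace ℝ (Fin n), ℂ)) :
    ∫⁻ ξ, ‖FT n φ ξ‖ₑ ^ 2 = ∫⁻ x, ‖φ x‖ₑ ^ 2 := by
  have hπ : (0 : ℝ) < 2 * π := by positivity
  obtain ⟨ψ, hψ⟩ := exists_schwartzMap_eq_FT φ
  rw [lintegral_enorm_sq_eq_ofReal_integral (hψ ▸ ψ.memLp 2),
    lintegral_enorm_sq_eq_ofReal_integral (φ.memLp 2 volume),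
    ← SchwartzMap.integral_norm_sq_fourier φ]
  congr 1
  simp_rw [FT_eq_smul_fourier, norm_smul, mul_pow]
  rw [integral_const_mul, Measure.integral_comp_smul volume (fun ξ => ‖𝓕 (φ : _ → ℂ) ξ‖ ^ 2),
    finrank_euclideanSpace_fin, smul_eq_mul, ← mul_assoc, abs_of_nonneg (by positivity),
    Real.norm_of_nonneg (by positivity), ← Real.rpow_mul_natCast hπ.le, inv_pow, inv_inv,
    ← Real.rpow_add_natCast hπ.ne', SchwartzMap.fourier_coe]
  norm_num

theorem integrable_sqrt_one_add_sq_rpow_mul {E : Type*} [NormedAddCommGroup E]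
    [InnerProductSpace ℝ E] [FiniteDimensional ℝ E] [MeasurableSpace E] [BorelSpace E]
    (ψ : 𝓢(E, ℂ)) (r : ℝ) : Integrable fun ξ => ((√(1 + ‖ξ‖ ^ 2) ^ r : ℝ) : ℂ) * ψ ξ := by
  have hweight := Function.hasTemperateGrowth_one_add_norm_sq_rpow E (r / 2)
  refine (SchwartzMap.smulLeftCLM ℂ (fun ξ : E => (1 + ‖ξ‖ ^ 2) ^ (r / 2)) ψ).integrable.congr
    (.of_forall fun ξ => ?_)
  simp only [SchwartzMap.smulLeftCLM_apply_apply hweight, Complex.real_smul]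
  rw [Real.sqrt_eq_rpow, ← Real.rpow_mul (by positivity), one_div_mul_eq_div]

end Schwartz

theorem mult_mul_cexp_eq_smul_fourierExtension {n : ℕ} (P : EuclideanSpace ℝ (Fin n) → ℝ)
    (h f : EuclideanSpace ℝ (Fin n) → ℂ) (t : ℝ) (x : EuclideanSpace ℝ (Fin n)) :
    mult n (fun ξ => h ξ * cexp (I * t * (P ξ : ℝ))) f x =
      ((2 * π) ^ (-(n : ℝ) / 2) : ℝ) • fourierExtension P (fun ξ => h ξ * FT n f ξ) (t, x) := by
  rw [mult, IFT, fourierExtension]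
  congr 2 with ξ
  push_cast
  rw [mul_add, Complex.exp_add, mul_assoc I]
  ring

theorem exists_forall_norm_eq_one_mem_Icc {E : Type*} [NormedAddCommGroup E] [NormedSpace ℝ E]
    [FiniteDimensional ℝ E] {a : E → ℝ} (ha : Continuous a) (ha_pos : ∀ ξ, ξ ≠ 0 → 0 < a ξ) :
    ∃ c A : ℝ, 0 < c ∧ ∀ ξ, ‖ξ‖ = 1 → a ξ ∈ Set.Icc c A := by
  have hcompact : IsCompact (Metric.sphere (0 : E) 1) := isCompact_sphere 0 1
  obtain ⟨A, hA⟩ := hcompact.bddAbove_image ha.continuousOn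
  obtain hempty | hne := (Metric.sphere (0 : E) 1).eq_empty_or_nonempty
  · refine ⟨1, 1, one_pos, fun ξ hξ => absurd (mem_sphere_zero_iff_norm.2 hξ) ?_⟩
    simp [hempty]
  · obtain ⟨ξ₀, hξ₀, hmin⟩ := hcompact.exists_isMinOn hne ha.continuousOn
    refine ⟨a ξ₀, A, ha_pos ξ₀ (ne_zero_of_mem_unit_sphere ⟨ξ₀, hξ₀⟩), fun ξ hξ => ?_⟩
    have hξ_mem := mem_sphere_zero_iff_norm.2 hξ
    exact ⟨hmin hξ_mem, hA ⟨ξ, hξ_mem, rfl⟩⟩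

theorem eLpNorm_two_le_of_lintegral_le {X Y F G : Type*} [MeasurableSpace X] [MeasurableSpace Y]
    {μ : Measure X} {ν : Measure Y} [ENorm F] [ENorm G] {f : X → F} {g : Y → G} {C : ℝ}
    (hC : 0 ≤ C) (h : ∫⁻ x, ‖f x‖ₑ ^ 2 ∂μ ≤ .ofReal C * ∫⁻ y, ‖g y‖ₑ ^ 2 ∂ν) :
    eLpNorm f 2 μ ≤ .ofReal √C * eLpNorm g 2 ν := by
  rw [eLpNorm_eq_lintegral_rpow_enorm_toReal two_ne_zero ENNReal.ofNat_ne_top,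
    eLpNorm_eq_lintegral_rpow_enorm_toReal two_ne_zero ENNReal.ofNat_ne_top]
  simp only [ENNReal.toReal_ofNat, ENNReal.rpow_ofNat]
  rw [Real.sqrt_eq_rpow, ← ENNReal.ofReal_rpow_of_nonneg hC (by norm_num),
    ← ENNReal.mul_rpow_of_nonneg _ _ (by norm_num)]
  exact ENNReal.rpow_le_rpow h (by norm_num)

theorem enorm_ofReal_rpow_sq {r : ℝ} (hr : 0 ≤ r) (s : ℝ) :
    ‖((r ^ s : ℝ) : ℂ)‖ₑ ^ 2 = .ofReal (r ^ (s * 2)) := by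
  rw [← ofReal_norm, Complex.norm_real, Real.norm_of_nonneg (by positivity),
    ← ENNReal.ofReal_pow (by positivity), ← Real.rpow_mul_natCast hr, Nat.cast_ofNat]

theorem norm_sqrt_one_add_sq_rpow_sq_le {V : Type*} [NormedAddCommGroup V] {r : ℝ} (hr : 0 ≤ r)
    (v : V) : ‖((√(1 + ‖v‖ ^ 2) ^ (r / 2) : ℝ) : ℂ)‖ ^ 2 ≤ (1 + ‖v‖) ^ r := by
  rw [Complex.norm_real, Real.norm_of_nonneg (by positivity),
    ← Real.rpow_mul_natCast (by positivity), Nat.cast_ofNat, div_mul_cancel₀ r two_ne_zero]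
  refine Real.rpow_le_rpow (by positivity) ((Real.sqrt_le_left (by positivity)).2 ?_) hr
  nlinarith [norm_nonneg v]

theorem smoothing_type_II_homogeneous_general (n : ℕ) (m : ℝ) (hm1 : 1 < m) (hmn : m < n)
    (a : EuclideanSpace ℝ (Fin n) → ℝ) (ha : Measurable a)
    (ha_hom : ∀ t : ℝ, 0 < t → ∀ ξ, a (t • ξ) = t * a ξ) {c A : ℝ} (hc : 0 < c)
    (hac : ∀ ξ, ‖ξ‖ = 1 → a ξ ∈ Set.Icc c A) :
    ∃ C > 0, ∀ φ : SchwartzMap (EuclideanSpace ℝ (Fin n)) ℂ,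
      eLpNorm (fun tx : ℝ × EuclideanSpace ℝ (Fin n) =>
          ((Real.sqrt (1 + ‖tx.2‖ ^ 2) ^ (-(m / 2)) : ℝ) : ℂ) *
            mult n (fun ξ => ((Real.sqrt (1 + ‖ξ‖ ^ 2) ^ ((m - 1) / 2) : ℝ) : ℂ) *
                Complex.exp (Complex.I * (tx.1 : ℂ) * ((a ξ ^ m : ℝ) : ℂ)))
              (fun y => φ y) tx.2) 2 volume
        ≤ ENNReal.ofReal C * eLpNorm (fun x => φ x) 2 volume := by
  obtain ⟨C, hC, hmain⟩ := exists_lintegral_weight_mul_enorm_fourierExtension_sq_le hm1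
    (by rwa [finrank_euclideanSpace_fin]) ha ha_hom hc hac
  refine ⟨√((2 * π) ^ (-(n : ℝ) / 2 * 2) * C), by positivity,
    fun φ => eLpNorm_two_le_of_lintegral_le (by positivity) ?_⟩
  obtain ⟨ψ, hψ⟩ := exists_schwartzMap_eq_FT φ
  have hbound := hmain (fun ξ => ((√(1 + ‖ξ‖ ^ 2) ^ ((m - 1) / 2) : ℝ) : ℂ)) (FT n φ) (by fun_prop)
    (norm_sqrt_one_add_sq_rpow_sq_le (by linarith)) (hψ ▸ ψ.continuous.measurable)
    (hψ ▸ integrable_sqrt_one_add_sq_rpow_mul ψ _)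
  rw [← lintegral_enorm_FT_sq, ENNReal.ofReal_mul (by positivity), mul_assoc]
  grw [← hbound]
  rw [← lintegral_const_mul' _ _ ENNReal.ofReal_ne_top]
  refine (lintegral_congr fun z => ?_).le
  rw [mult_mul_cexp_eq_smul_fourierExtension, Complex.real_smul, enorm_mul, enorm_mul,
    mul_pow, mul_pow, enorm_ofReal_rpow_sq (by positivity), enorm_ofReal_rpow_sq (by positivity),
    mul_left_comm, neg_mul, div_mul_cancel₀ m two_ne_zero]

theorem smoothing_type_II_homogeneous (n : ℕ) (hn : 2 ≤ n) (m : ℝ) (hm1 : 1 < m)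
    (hmn : m < n)
    (a : EuclideanSpace ℝ (Fin n) → ℝ)
    (ha_cont : Continuous a)
    (ha_smooth : ContDiffOn ℝ (⊤ : ℕ∞) a {(0 : EuclideanSpace ℝ (Fin n))}ᶜ)
    (ha_hom : ∀ t : ℝ, 0 < t → ∀ ξ, a (t • ξ) = t * a ξ)
    (ha_pos : ∀ ξ : EuclideanSpace ℝ (Fin n), ξ ≠ 0 → 0 < a ξ) :
    ∃ C > 0, ∀ φ : SchwartzMap (EuclideanSpace ℝ (Fin n)) ℂ,
      eLpNorm (fun tx : ℝ × EuclideanSpace ℝ (Fin n) =>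
          ((Real.sqrt (1 + ‖tx.2‖ ^ 2) ^ (-(m / 2)) : ℝ) : ℂ) *
            mult n (fun ξ => ((Real.sqrt (1 + ‖ξ‖ ^ 2) ^ ((m - 1) / 2) : ℝ) : ℂ) *
                Complex.exp (Complex.I * (tx.1 : ℂ) * ((a ξ ^ m : ℝ) : ℂ)))
              (fun y => φ y) tx.2) 2 volume
        ≤ ENNReal.ofReal C * eLpNorm (fun x => φ x) 2 volume := by
  obtain ⟨c, A, hc, hac⟩ := exists_forall_norm_eq_one_mem_Icc ha_cont ha_pos
  exact smoothing_type_II_homogeneous_general n m hm1 hmn a ha_cont.measurable ha_hom hc hac
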